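/- Let α ∈ (0,1) and let X = (X_1,…,X_n) be a random vector with VaR_α(X_i) = 0 for every i. Let A be an event independent of X with P(A) = p ∈ (0,1), and set Z = (X_1·1_A, …, X_n·1_A). Then DQ^VaR_α(Z) = p · DQ^VaR_α(X). -/

import Mathlib

open MeasureTheory ProbabilityTheory Filter Set

namespace DQ

variable {Ω : Type*} [MeasurableSpace Ω]

/-- An atomless probability measure: every non-null measurable set has a measurable
subset of strictly smaller positive measure. -/
def Atomless (P : Measure Ω) : Prop :=
  ∀ A : Set Ω, MeasurableSet A → 0 < P A →
    ∃ B, MeasurableSet B ∧ B ⊆ A ∧ 0 < P B ∧ P B < P A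

/-- Value-at-Risk at level `α` (small-`α` convention):
`VaR_α(X) = inf {x | P(X ≤ x) ≥ 1 - α}`. -/
noncomputable def VaR (P : Measure Ω) (α : ℝ) (X : Ω → ℝ) : ℝ :=
  sInf {x : ℝ | 1 - α ≤ (P {ω | X ω ≤ x}).toReal}

/-- Expected Shortfall at level `α`: `ES_α(X) = (1/α) ∫_0^α VaR_β(X) dβ`. -/
noncomputable def ES (P : Measure Ω) (α : ℝ) (X : Ω → ℝ) : ℝ :=
  (1 / α) * ∫ β in Set.Ioo (0 : ℝ) α, VaR P β X

/-- `α* = inf {β ∈ (0,1) | VaR_β(∑ Xᵢ) ≤ ∑ VaR_α(Xᵢ)}`, with `inf ∅ = 1`. -/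
noncomputable def alphaStarVaR (P : Measure Ω) (α : ℝ) {n : ℕ} (X : Fin n → Ω → ℝ) : ℝ :=
  sInf ({β ∈ Set.Ioo (0 : ℝ) 1 |
    VaR P β (fun ω => ∑ i, X i ω) ≤ ∑ i, VaR P α (X i)} ∪ {1})

/-- Diversification quotient based on VaR: `DQ^VaR_α(X) = α*/α`. -/
noncomputable def DQVaR (P : Measure Ω) (α : ℝ) {n : ℕ} (X : Fin n → Ω → ℝ) : ℝ :=
  alphaStarVaR P α X / α

/-- `α* = inf {β ∈ (0,1) | ES_β(∑ Xᵢ) ≤ ∑ ES_α(Xᵢ)}`, with `inf ∅ = 1`. -/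
noncomputable def alphaStarES (P : Measure Ω) (α : ℝ) {n : ℕ} (X : Fin n → Ω → ℝ) : ℝ :=
  sInf ({β ∈ Set.Ioo (0 : ℝ) 1 |
    ES P β (fun ω => ∑ i, X i ω) ≤ ∑ i, ES P α (X i)} ∪ {1})

/-- Diversification quotient based on ES: `DQ^ES_α(X) = α*/α`. -/
noncomputable def DQES (P : Measure Ω) (α : ℝ) {n : ℕ} (X : Fin n → Ω → ℝ) : ℝ :=
  alphaStarES P α X / α

end DQ

namespace DQ

theorem VaR_le_iff {Ω : Type*} [MeasurableSpace Ω] (P : Measure Ω) [IsProbabilityMeasure P]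
    (X : Ω → ℝ) (hX : Measurable X) (β : ℝ) (hβ : β ∈ Set.Ioo (0 : ℝ) 1) (x : ℝ) :
    VaR P β X ≤ x ↔ 1 - β ≤ (P {ω | X ω ≤ x}).toReal := by
  have : IsProbabilityMeasure (P.map X) := Measure.isProbabilityMeasure_map hX.aemeasurable
  have hF : ∀ y, (P {ω | X ω ≤ y}).toReal = cdf (P.map X) y := by
    intro y
    rw [cdf_eq_real, Measure.real, Measure.map_apply hX measurableSet_Iic]
    rfl
  unfold VaR
  simp only [hF]
  set F := cdf (P.map X) with hFdef
  have hbdd : BddBelow {x : ℝ | 1 - β ≤ F x} := by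
    have h := (tendsto_cdf_atBot (P.map X)).eventually_lt_const (show (0 : ℝ) < 1 - β by linarith [hβ.2])
    obtain ⟨b, hb⟩ := h.exists
    refine ⟨b, fun y hy => ?_⟩
    by_contra hlt
    have := F.mono (not_le.mp hlt).le
    have hy' : 1 - β ≤ F y := hy
    linarith
  have hne : {x : ℝ | 1 - β ≤ F x}.Nonempty := by
    have h := (tendsto_cdf_atTop (P.map X)).eventually_const_lt (show (1 - β : ℝ) < 1 by linarith [hβ.1])
    obtain ⟨b, hb⟩ := h.exists
    exact ⟨b, hb.le⟩
  constructor
  · intro h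
    have hr : Tendsto F (nhdsWithin x (Set.Ioi x)) (nhds (F x)) :=
      (F.right_continuous x).mono_left (nhdsWithin_mono _ Set.Ioi_subset_Ici_self)
    refine ge_of_tendsto hr ?_
    filter_upwards [self_mem_nhdsWithin] with y hy
    obtain ⟨z, hz, hzy⟩ := exists_lt_of_csInf_lt hne (lt_of_le_of_lt h hy)
    exact le_trans hz (F.mono hzy.le)
  · intro h
    exact csInf_le hbdd h

theorem alphaStar_eq {Ω : Type*} [MeasurableSpace Ω] (P : Measure Ω) [IsProbabilityMeasure P]
    (n : ℕ) (X : Fin n → Ω → ℝ) (hX : ∀ i, Measurable (X i))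
    (α : ℝ) (h0 : ∀ i, VaR P α (X i) = 0) :
    alphaStarVaR P α X = P.real {ω | 0 < ∑ i, X i ω} := by
  have hS : Measurable (fun ω => ∑ i, X i ω) := Finset.measurable_sum _ (fun i _ => hX i)
  have hm : MeasurableSet {ω | 0 < ∑ i, X i ω} := measurableSet_lt measurable_const hS
  have hc : P.real {ω | ∑ i, X i ω ≤ 0} = 1 - P.real {ω | 0 < ∑ i, X i ω} := by
    rw [← probReal_compl_eq_one_sub hm]
    congr 1
    ext ω
    simp
  have h1 : P.real {ω | 0 < ∑ i, X i ω} ≤ 1 := measureReal_le_one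
  have h2 : 0 ≤ P.real {ω | 0 < ∑ i, X i ω} := measureReal_nonneg
  unfold alphaStarVaR
  simp only [h0, Finset.sum_const_zero]
  set q := P.real {ω | 0 < ∑ i, X i ω} with hq
  have key : ∀ β ∈ Set.Ioo (0 : ℝ) 1, (VaR P β (fun ω => ∑ i, X i ω) ≤ 0 ↔ q ≤ β) := by
    intro β hβ
    rw [VaR_le_iff P _ hS β hβ]
    change 1 - β ≤ P.real {ω | ∑ i, X i ω ≤ 0} ↔ _
    rw [hc]
    constructor <;> intro h <;> linarith
  have hlb : ∀ b ∈ ({β ∈ Set.Ioo (0 : ℝ) 1 | VaR P β (fun ω => ∑ i, X i ω) ≤ 0} ∪ {1} : Set ℝ),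
      q ≤ b := by
    rintro b (⟨hb, hb'⟩ | hb)
    · exact (key b hb).1 hb'
    · rw [Set.mem_singleton_iff.1 hb]; exact h1
  apply le_antisymm
  · refine le_of_forall_gt_imp_ge_of_dense fun a ha => ?_
    by_cases ha1 : a < 1
    · exact csInf_le ⟨q, hlb⟩ (Or.inl ⟨⟨by linarith, ha1⟩, (key a ⟨by linarith, ha1⟩).2 ha.le⟩)
    · exact le_trans (csInf_le ⟨q, hlb⟩ (Or.inr rfl)) (not_lt.1 ha1)
  · exact le_csInf ⟨1, Or.inr rfl⟩ hlb

end DQ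

open DQ in
/-- If VaR_α(Xᵢ) = 0 for all i, A is an event with P(A) = p ∈ (0,1) independent of X,
and Z = (X₁·1_A, …, Xₙ·1_A), then DQ^VaR_α(Z) = p · DQ^VaR_α(X). -/
theorem stmt10 {Ω : Type*} [MeasurableSpace Ω] (P : Measure Ω) [IsProbabilityMeasure P]
    (hP : Atomless P) (n : ℕ) (X : Fin n → Ω → ℝ) (hX : ∀ i, Measurable (X i))
    (α : ℝ) (hα : α ∈ Set.Ioo (0 : ℝ) 1) (hVaR0 : ∀ i, VaR P α (X i) = 0)
    (A : Set Ω) (hA : MeasurableSet A) (p : ℝ) (hp : p ∈ Set.Ioo (0 : ℝ) 1)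
    (hpA : P A = ENNReal.ofReal p)
    (hindep : ProbabilityTheory.Indep (MeasurableSpace.generateFrom {A})
      (MeasurableSpace.comap (fun ω (i : Fin n) => X i ω) inferInstance) P) :
    DQVaR P α (fun i ω => A.indicator (X i) ω) = p * DQVaR P α X := by
  have hZ : ∀ i, Measurable (fun ω => A.indicator (X i) ω) := fun i => (hX i).indicator hA
  have hZ0 : ∀ i, VaR P α (fun ω => A.indicator (X i) ω) = 0 := by
    intro i
    apply le_antisymm
    · rw [VaR_le_iff P _ (hZ i) α hα]
      have h := (VaR_le_iff P _ (hX i) α hα 0).1 (hVaR0 i).le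
      refine h.trans (measureReal_mono (μ := P) ?_)
      intro ω hω
      by_cases hωA : ω ∈ A
      · simpa [hωA] using hω
      · simp [hωA]
    · by_contra hlt
      obtain ⟨x, hx, hx0⟩ := exists_between (not_le.1 hlt)
      have h := (VaR_le_iff P _ (hZ i) α hα x).1 hx.le
      have h' : VaR P α (X i) ≤ x := by
        rw [VaR_le_iff P _ (hX i) α hα]
        refine h.trans (measureReal_mono (μ := P) ?_)
        intro ω hω
        by_cases hωA : ω ∈ A
        · simpa [hωA] using hω
        · simp [hωA] at hω
          linarith
      rw [hVaR0 i] at h'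
      linarith
  unfold DQVaR
  rw [alphaStar_eq P n _ hZ α hZ0, alphaStar_eq P n X hX α hVaR0]
  have hset : {ω | 0 < ∑ i, A.indicator (X i) ω} = A ∩ {ω | 0 < ∑ i, X i ω} := by
    ext ω
    by_cases hωA : ω ∈ A <;> simp [hωA]
  have hB : MeasurableSet[MeasurableSpace.comap (fun ω (i : Fin n) => X i ω) inferInstance]
      {ω | 0 < ∑ i, X i ω} :=
    ⟨{v | 0 < ∑ i, v i}, measurableSet_lt measurable_const
      (Finset.measurable_sum _ (fun i _ => measurable_pi_apply i)), rfl⟩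
  have hmul := (Indep_iff _ _ P).1 hindep A _
    (MeasurableSpace.measurableSet_generateFrom (Set.mem_singleton A)) hB
  rw [hset, Measure.real, hmul, ENNReal.toReal_mul, hpA, ENNReal.toReal_ofReal hp.1.le, mul_div_assoc]
  rfl
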